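/- arXiv:2305.13706 — 2 statements merged into one kernel-verified Lean document; each statement's English description precedes it below -/
import Mathlib

section
/- (Theorem 2(i), monotonicity of the Q function with respect to the channel state of a utilized channel.) Suppose V is AoI-antitone. Let a be a feasible action with a_n = m for some channel m ≥ 1, let s = (τ, H), and let s'_Ch = (τ, H'_{n,m}) where H'_{n,m} is identical to H except that its (n,m)-entry satisfies h'_{n,m} > h_{n,m}. Then Q(s'_Ch, a) ≤ Q(s, a). -/
/-- AoI (Age-of-Information) state vector: each device's AoI is a positive natural. -/
abbrev AoI (N : ℕ) := Fin N → ℕ+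

/-- Channel state matrix: entry `(n, m)` is the (quantized) state of the channel
between device `n` and the destination on sub-channel `m`, one of `ĥ` levels. -/
abbrev Chan (N M hh : ℕ) := Fin N → Fin M → Fin hh

/-- A state of the MDP: a pair `s = (τ, H)`. -/
abbrev MDPState (N M hh : ℕ) := AoI N × Chan N M hh

/-- An action: `a n = some m` means device `n` transmits on channel `m`;
`a n = none` means device `n` is idle (`a_n = 0`). A device uses at most
one channel automatically since `a` is a function. -/
abbrev SchedAction (N M : ℕ) := Fin N → Option (Fin M)

/-- Feasibility: every channel `m` is used by exactly one device. -/
def Feasible {N M : ℕ} (a : SchedAction N M) : Prop :=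
  ∀ m : Fin M, ∃! n : Fin N, a n = some m

/-- Probability that device `n`'s AoI transition is the one encoded by the
success flags `b` (`b n = true` iff device `n`'s packet is received):
if `a n = some m`, success has probability `1 - p n m (H n m)` and failure
probability `p n m (H n m)`; an idle device surely fails. -/
def devProb {N M hh : ℕ} (p : Fin N → Fin M → Fin hh → ℝ)
    (H : Chan N M hh) (a : SchedAction N M) (b : Fin N → Bool) (n : Fin N) : ℝ :=
  match a n with
  | some m => if b n then 1 - p n m (H n m) else p n m (H n m)
  | none => if b n then 0 else 1

/-- The next AoI vector: `1` upon reception, `τ n + 1` otherwise. -/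
def nextAoI {N : ℕ} (τ : AoI N) (b : Fin N → Bool) : AoI N :=
  fun n => if b n then 1 else τ n + 1

/-- The expected next-state value `∑_{s⁺} P(s⁺ | s, a) V(s⁺)`, where
`P((τ⁺,H⁺) | (τ,H), a) = (∏_n Pr(τ_n⁺ | τ_n, H, a_n)) · q(H⁺)`. -/
noncomputable def expNext {N M hh : ℕ} (p : Fin N → Fin M → Fin hh → ℝ)
    (q : Chan N M hh → ℝ) (V : MDPState N M hh → ℝ)
    (s : MDPState N M hh) (a : SchedAction N M) : ℝ :=
  ∑ Hp : Chan N M hh, ∑ b : Fin N → Bool,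
    q Hp * (∏ n, devProb p s.2 a b n) * V (nextAoI s.1 b, Hp)

/-- `Q(s,a) = r(s) + γ ∑_{s⁺} P(s⁺ | s, a) V(s⁺)` with reward
`r(s) = -∑_n g_n(τ_n)`. -/
noncomputable def Qval {N M hh : ℕ} (p : Fin N → Fin M → Fin hh → ℝ)
    (q : Chan N M hh → ℝ) (g : Fin N → ℕ+ → ℝ) (γ : ℝ)
    (V : MDPState N M hh → ℝ) (s : MDPState N M hh) (a : SchedAction N M) : ℝ :=
  (- ∑ n, g n (s.1 n)) + γ * expNext p q V s a

/-- `V` is AoI-antitone: increasing a single AoI coordinate (keeping everything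
else fixed) cannot increase the value. -/
def AoIAntitone {N M hh : ℕ} (V : MDPState N M hh → ℝ) : Prop :=
  ∀ (n : Fin N) (H : Chan N M hh) (τ τ' : AoI N),
    (∀ k, k ≠ n → τ' k = τ k) → τ n ≤ τ' n → V (τ', H) ≤ V (τ, H)

/-!
Packet receptions are independent Bernoulli events, and a worse channel matrix lowers every success
probability. Coupling the two Bernoulli laws of each device monotonically and taking the product of
these couplings yields a joint law of two success vectors, supported on the pairs where the worse
matrix receives no more packets. An AoI-antitone `V` is monotone in the success vector, so its
expectation can only drop.
-/

section ProductCoupling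

variable {ι : Type*} [Fintype ι] [DecidableEq ι] {R : Type*} [CommSemiring R]
  [PartialOrder R] [IsOrderedRing R]

theorem sum_prod_mul_le_sum_prod_mul_of_coupling {κ : ι → Type*} [∀ i, Fintype (κ i)]
    [∀ i, Preorder (κ i)] {J : ∀ i, κ i → κ i → R} (hJ_nonneg : ∀ i x y, 0 ≤ J i x y)
    (hJ_supp : ∀ i x y, ¬x ≤ y → J i x y = 0) {f : (∀ i, κ i) → R} (hf : Monotone f) :
    ∑ b, (∏ i, ∑ y, J i (b i) y) * f b ≤ ∑ c, (∏ i, ∑ x, J i x (c i)) * f c := by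
  have hpair (b c : ∀ i, κ i) : (∏ i, J i (b i) (c i)) * f b ≤ (∏ i, J i (b i) (c i)) * f c := by
    by_cases hbc : b ≤ c
    · exact mul_le_mul_of_nonneg_left (hf hbc) (Finset.prod_nonneg fun i _ => hJ_nonneg i _ _)
    · obtain ⟨i, hi⟩ := not_forall.mp hbc
      have hzero : ∏ i, J i (b i) (c i) = 0 :=
        Finset.prod_eq_zero (Finset.mem_univ i) (hJ_supp i _ _ hi)
      simp only [hzero, zero_mul, le_refl]
  calc
    ∑ b : ∀ i, κ i, (∏ i, ∑ y, J i (b i) y) * f b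
      = ∑ b : ∀ i, κ i, ∑ c : ∀ i, κ i, (∏ i, J i (b i) (c i)) * f b := by
      simp only [Fintype.prod_sum, Finset.sum_mul]
    _ ≤ ∑ b : ∀ i, κ i, ∑ c : ∀ i, κ i, (∏ i, J i (b i) (c i)) * f c :=
      Finset.sum_le_sum fun b _ => Finset.sum_le_sum fun c _ => hpair b c
    _ = ∑ c : ∀ i, κ i, ∑ b : ∀ i, κ i, (∏ i, J i (b i) (c i)) * f c := Finset.sum_comm
    _ = ∑ c : ∀ i, κ i, (∏ i, ∑ x, J i x (c i)) * f c := by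
      simp only [Fintype.prod_sum, Finset.sum_mul]

end ProductCoupling

section Bernoulli

variable {R : Type*} [CommRing R]

/-- The mass function of the Bernoulli law with success probability `x`. -/
def bernoulliWeight (x : R) (c : Bool) : R :=
  if c then x else 1 - x

/-- The monotone coupling of the Bernoulli laws with success probabilities `x ≤ y`: the joint law of
`(U < x, U < y)` for a uniform `U` on `[0, 1]`. -/
def bernoulliCoupling (x y : R) : Bool → Bool → R
  | false, false => 1 - y
  | false, true => y - x
  | true, false => 0
  | true, true => x

/-- The expectation of `f` under the product of the Bernoulli laws with success probabilities
`x i`. -/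
def bernoulliExpectation {ι : Type*} [Fintype ι] [DecidableEq ι] (x : ι → R)
    (f : (ι → Bool) → R) : R :=
  ∑ b, (∏ i, bernoulliWeight (x i) (b i)) * f b

theorem sum_bernoulliCoupling_right (x y : R) (b : Bool) :
    ∑ c, bernoulliCoupling x y b c = bernoulliWeight x b := by
  cases b <;> simp [bernoulliCoupling, bernoulliWeight]

theorem sum_bernoulliCoupling_left (x y : R) (c : Bool) :
    ∑ b, bernoulliCoupling x y b c = bernoulliWeight y c := by
  cases c <;> simp [bernoulliCoupling, bernoulliWeight]

theorem bernoulliCoupling_eq_zero_of_not_le (x y : R) {b c : Bool} (hbc : ¬b ≤ c) :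
    bernoulliCoupling x y b c = 0 := by
  match b, c with
  | true, false => rfl
  | false, _ => exact absurd (Bool.false_le _) hbc
  | true, true => exact absurd le_rfl hbc

variable [PartialOrder R] [IsOrderedRing R]

theorem bernoulliCoupling_nonneg {x y : R} (hx : 0 ≤ x) (hxy : x ≤ y) (hy : y ≤ 1) (b c : Bool) :
    0 ≤ bernoulliCoupling x y b c := by
  cases b <;> cases c <;> simp [bernoulliCoupling, hx, hxy, hy]

theorem bernoulliExpectation_le_of_le {ι : Type*} [Fintype ι] [DecidableEq ι] {x y : ι → R}
    (hx : ∀ i, 0 ≤ x i) (hxy : x ≤ y) (hy : ∀ i, y i ≤ 1) {f : (ι → Bool) → R} (hf : Monotone f) :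
    bernoulliExpectation x f ≤ bernoulliExpectation y f := by
  have hcoupled := sum_prod_mul_le_sum_prod_mul_of_coupling
    (fun i => bernoulliCoupling_nonneg (hx i) (hxy i) (hy i))
    (fun i _ _ => bernoulliCoupling_eq_zero_of_not_le (x i) (y i)) hf
  simpa only [bernoulliExpectation, sum_bernoulliCoupling_right, sum_bernoulliCoupling_left] using
    hcoupled

end Bernoulli

theorem antitone_of_update_le {ι : Type*} [Finite ι] [DecidableEq ι] {α : ι → Type*}
    [∀ i, Preorder (α i)] {β : Type*} [Preorder β] {f : (∀ i, α i) → β}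
    (hf : ∀ x i t, x i ≤ t → f (Function.update x i t) ≤ f x) : Antitone f := by
  intro x y hxy
  have := Fintype.ofFinite ι
  have hpiecewise (s : Finset ι) : f (s.piecewise y x) ≤ f x := by
    induction s using Finset.induction_on with
    | empty => rw [Finset.piecewise_empty]
    | insert i s hi ih =>
      rw [Finset.piecewise_insert]
      refine (hf _ i (y i) ?_).trans ih
      rw [Finset.piecewise_eq_of_notMem _ _ _ hi]
      exact hxy i
  simpa only [Finset.piecewise_univ] using hpiecewise Finset.univ

section Scheduling

variable {N M hh : ℕ}

theorem AoIAntitone.antitone {V : MDPState N M hh → ℝ} (hV : AoIAntitone V) (H : Chan N M hh) :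
    Antitone fun τ => V (τ, H) :=
  antitone_of_update_le fun τ n t ht =>
    hV n H τ _ (fun _ hk => Function.update_of_ne hk t τ) (by rwa [Function.update_self])

theorem nextAoI_antitone (τ : AoI N) : Antitone (nextAoI τ) := by
  intro b c hbc n
  cases hc : c n with
  | true => simp [nextAoI, hc]
  | false =>
    have hb : b n = false := Bool.eq_false_of_le_false ((hbc n).trans_eq hc)
    simp [nextAoI, hb, hc]

/-- The probability that a packet of device `n` is received; an idle device never succeeds. -/
def successProb (p : Fin N → Fin M → Fin hh → ℝ) (H : Chan N M hh) (a : SchedAction N M)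
    (n : Fin N) : ℝ :=
  (a n).elim 0 fun m => 1 - p n m (H n m)

variable {p : Fin N → Fin M → Fin hh → ℝ}

theorem successProb_nonneg (hp1 : ∀ n m h, p n m h ≤ 1) (H : Chan N M hh) (a : SchedAction N M)
    (n : Fin N) : 0 ≤ successProb p H a n := by
  unfold successProb
  cases a n with
  | none => exact le_rfl
  | some m => exact sub_nonneg.mpr (hp1 n m _)

theorem successProb_le_one (hp0 : ∀ n m h, 0 ≤ p n m h) (H : Chan N M hh) (a : SchedAction N M)
    (n : Fin N) : successProb p H a n ≤ 1 := by
  unfold successProb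
  cases a n with
  | none => exact zero_le_one
  | some m => exact sub_le_self 1 (hp0 n m _)

theorem successProb_antitone (hpmono : ∀ n m, Monotone (p n m)) (a : SchedAction N M) :
    Antitone fun H => successProb p H a := by
  intro H H' hH n
  dsimp only [successProb]
  cases a n with
  | none => exact le_rfl
  | some m => exact sub_le_sub_left (hpmono n m (hH n m)) 1

theorem devProb_eq_bernoulliWeight (p : Fin N → Fin M → Fin hh → ℝ) (H : Chan N M hh)
    (a : SchedAction N M) (b : Fin N → Bool) (n : Fin N) :
    devProb p H a b n = bernoulliWeight (successProb p H a n) (b n) := by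
  unfold devProb successProb bernoulliWeight
  cases a n <;> simp

theorem expNext_eq_sum_bernoulliExpectation (p : Fin N → Fin M → Fin hh → ℝ)
    (q : Chan N M hh → ℝ) (V : MDPState N M hh → ℝ) (s : MDPState N M hh)
    (a : SchedAction N M) :
    expNext p q V s a = ∑ Hp, q Hp *
      bernoulliExpectation (successProb p s.2 a) (fun b => V (nextAoI s.1 b, Hp)) := by
  simp only [expNext, bernoulliExpectation, devProb_eq_bernoulliWeight, Finset.mul_sum, mul_assoc]

theorem expNext_antitone_channel (hp0 : ∀ n m h, 0 ≤ p n m h) (hp1 : ∀ n m h, p n m h ≤ 1)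
    (hpmono : ∀ n m, Monotone (p n m)) {q : Chan N M hh → ℝ} (hq0 : ∀ H, 0 ≤ q H)
    {V : MDPState N M hh → ℝ} (hV : AoIAntitone V) (a : SchedAction N M) (τ : AoI N) :
    Antitone fun H => expNext p q V (τ, H) a := by
  intro H H' hH
  simp only [expNext_eq_sum_bernoulliExpectation]
  refine Finset.sum_le_sum fun Hp _ => mul_le_mul_of_nonneg_left ?_ (hq0 Hp)
  exact bernoulliExpectation_le_of_le (successProb_nonneg hp1 H' a)
    (successProb_antitone hpmono a hH) (successProb_le_one hp0 H a)
    ((hV.antitone Hp).comp (nextAoI_antitone τ))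

theorem q_antitone_in_used_channel_general (hp0 : ∀ n m h, 0 ≤ p n m h)
    (hp1 : ∀ n m h, p n m h ≤ 1) (hpmono : ∀ n m, Monotone (p n m)) {q : Chan N M hh → ℝ}
    (hq0 : ∀ H, 0 ≤ q H) (g : Fin N → ℕ+ → ℝ) {γ : ℝ} (hγ0 : 0 ≤ γ)
    {V : MDPState N M hh → ℝ} (hV : AoIAntitone V) (a : SchedAction N M) (τ : AoI N) :
    Antitone fun H => Qval p q g γ V (τ, H) a :=
  ((expNext_antitone_channel hp0 hp1 hpmono hq0 hV a τ).const_mul hγ0).const_add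
    (-∑ n, g n (τ n))

theorem channel_le_of_eq_off_entry {H H' : Chan N M hh} {n : Fin N} {m : Fin M}
    (hagree : ∀ k l, (k, l) ≠ (n, m) → H' k l = H k l) (hH : H n m ≤ H' n m) : H ≤ H' := by
  intro k l
  by_cases hkl : (k, l) = (n, m)
  · obtain ⟨rfl, rfl⟩ := Prod.mk.inj hkl
    exact hH
  · exact (hagree k l hkl).ge

end Scheduling

/-- **Theorem 2(i)** (monotonicity of the Q function w.r.t. the channel state of a
utilized channel). If `V` is AoI-antitone, `a` is feasible with `a n = some m`, and
`H'` is identical to `H` except `H' n m > H n m`, then `Q((τ, H'), a) ≤ Q((τ, H), a)`. -/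
theorem q_antitone_in_used_channel
    (N M hh : ℕ) (hMN : M < N)
    (p : Fin N → Fin M → Fin hh → ℝ)
    (hp0 : ∀ n m h, 0 ≤ p n m h) (hp1 : ∀ n m h, p n m h ≤ 1)
    (hpmono : ∀ n m, Monotone (p n m))
    (q : Chan N M hh → ℝ) (hq0 : ∀ H, 0 ≤ q H) (hq1 : ∑ H : Chan N M hh, q H = 1)
    (g : Fin N → ℕ+ → ℝ) (hgpos : ∀ n τ, 0 < g n τ) (hgmono : ∀ n, Monotone (g n))
    (γ : ℝ) (hγ0 : 0 < γ) (hγ1 : γ < 1)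
    (V : MDPState N M hh → ℝ) (hV : AoIAntitone V)
    (a : SchedAction N M) (ha : Feasible a)
    (n : Fin N) (m : Fin M) (han : a n = some m)
    (τ : AoI N) (H H' : Chan N M hh)
    (hagree : ∀ k l, (k, l) ≠ (n, m) → H' k l = H k l)
    (hH : H n m < H' n m) :
    Qval p q g γ V (τ, H') a ≤ Qval p q g γ V (τ, H) a := by
  exact q_antitone_in_used_channel_general hp0 hp1 hpmono hq0 g hγ0.le hV a τ
    (channel_le_of_eq_off_entry hagree hH.le)
end

section
/- (Lemma 1, monotonicity of the optimal value function with respect to AoI states, in Bellman fixed-point form.) Assume each cost function g_n is bounded, positive, and nondecreasing. Then the Bellman optimality operator T, acting on bounded real-valued functions on the state space by (T V)(s) = r(s) + γ · max over feasible actions a of ∑_{s⁺} P(s⁺ | s, a) V(s⁺), has a unique bounded fixed point V* (i.e., V* = T V*), and V* is AoI-antitone: for every device index n, every channel matrix H, and every pair of AoI vectors τ, τ'_(n) that agree in all coordinates except that τ'_n ≥ τ_n, one has V*(τ'_(n), H) ≤ V*(τ, H). -/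
/-- The Bellman optimality operator: `(T V)(s) = r(s) + γ · max_{a feasible} ∑_{s⁺} P(s⁺|s,a) V(s⁺)`.
Since the set of feasible actions is finite and (as `M < N`) nonempty, the maximum
is the supremum of the corresponding (finite, nonempty) set of expected values. -/
noncomputable def bellmanT {N M hh : ℕ} (p : Fin N → Fin M → Fin hh → ℝ)
    (q : Chan N M hh → ℝ) (g : Fin N → ℕ+ → ℝ) (γ : ℝ)
    (V : MDPState N M hh → ℝ) : MDPState N M hh → ℝ := fun s =>
  (- ∑ n, g n (s.1 n)) +
    γ * sSup ((fun a => expNext p q V s a) '' {a : SchedAction N M | Feasible a})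

/-! The Bellman operator is monotone and shifts constants by the factor `γ`, so by Blackwell's
argument it contracts the sup distance, and Banach's theorem gives the unique bounded fixed point
as the limit of value iteration from `0`. The operator preserves antitonicity in the AoI vector:
the law of the success flags does not depend on that vector, so two chains started from ordered AoI
vectors can be driven by the same flags, which keeps them ordered. Antitonicity then passes to the
limit. -/

open Filter Topology BoundedContinuousFunction
open scoped NNReal

section FixedPoint

variable {α : Type*} {T : (α → ℝ) → α → ℝ} {γ : ℝ}

theorem abs_sub_le_mul_of_monotone_of_discount (hmono : Monotone T)
    (hdisc : ∀ V c s, 0 ≤ c → T (fun x => V x + c) s ≤ T V s + γ * c)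
    {V W : α → ℝ} {C : ℝ} (h : ∀ s, |V s - W s| ≤ C) (s : α) : |T V s - T W s| ≤ γ * C := by
  have hC : 0 ≤ C := (abs_nonneg _).trans (h s)
  have hVW : T V s ≤ T W s + γ * C :=
    (hmono (fun x => by linarith [(abs_le.1 (h x)).2]) s).trans (hdisc W C s hC)
  have hWV : T W s ≤ T V s + γ * C :=
    (hmono (fun x => by linarith [(abs_le.1 (h x)).1]) s).trans (hdisc V C s hC)
  exact abs_sub_le_iff.2 ⟨sub_le_iff_le_add'.2 hVW, sub_le_iff_le_add'.2 hWV⟩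

theorem bounded_apply_of_contraction
    (hT : ∀ V W C, (∀ s, |V s - W s| ≤ C) → ∀ s, |T V s - T W s| ≤ γ * C)
    (hT0 : ∃ B, ∀ s, |T 0 s| ≤ B) {V : α → ℝ} (hV : ∃ C, ∀ s, |V s| ≤ C) :
    ∃ C, ∀ s, |T V s| ≤ C := by
  obtain ⟨B, hB⟩ := hT0
  obtain ⟨C, hC⟩ := hV
  refine ⟨γ * C + B, fun s => ?_⟩
  calc |T V s| ≤ |T V s - T 0 s| + |T 0 s| := by simpa using abs_add_le (T V s - T 0 s) (T 0 s)
    _ ≤ γ * C + B := add_le_add (hT V 0 C (by simpa using hC) s) (hB s)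

theorem exists_bounded_fixedPoint_of_contraction (hγ0 : 0 ≤ γ) (hγ1 : γ < 1)
    (hT : ∀ V W C, (∀ s, |V s - W s| ≤ C) → ∀ s, |T V s - T W s| ≤ γ * C)
    (hT0 : ∃ B, ∀ s, |T 0 s| ≤ B) :
    ∃ V : α → ℝ, (∃ C, ∀ s, |V s| ≤ C) ∧ T V = V ∧
      (∀ W : α → ℝ, (∃ C, ∀ s, |W s| ≤ C) → T W = W → W = V) ∧
      Tendsto (fun k => T^[k] 0) atTop (𝓝 V) := by
  -- With the discrete topology on `α`, the bounded functions are the complete space `α →ᵇ ℝ`.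
  let _ : TopologicalSpace α := ⊥
  have _ : DiscreteTopology α := ⟨rfl⟩
  lift γ to ℝ≥0 using hγ0
  have hlift (V : α → ℝ) (hV : ∃ C, ∀ s, |V s| ≤ C) : ∃ F : α →ᵇ ℝ, ⇑F = V :=
    ⟨.ofNormedAddCommGroupDiscrete V hV.choose hV.choose_spec, rfl⟩
  have hbdd (F : α →ᵇ ℝ) : ∃ C, ∀ s, |F s| ≤ C := ⟨‖F‖, F.norm_coe_le_norm⟩
  choose Φ hΦ using fun F : α →ᵇ ℝ =>
    hlift (T F) (bounded_apply_of_contraction hT hT0 (hbdd F))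
  have hcontr : ContractingWith γ Φ := by
    refine ⟨by exact_mod_cast hγ1, LipschitzWith.of_dist_le_mul fun F G => ?_⟩
    refine (dist_le (by positivity)).2 fun s => ?_
    rw [hΦ, hΦ]
    exact hT F G _ (fun x => F.dist_coe_le_dist (g := G) x) s
  have hiter (k : ℕ) : ⇑(Φ^[k] 0) = T^[k] 0 :=
    Function.Semiconj.iterate_right (f := ((⇑) : (α →ᵇ ℝ) → α → ℝ)) hΦ k 0
  refine ⟨hcontr.fixedPoint, hbdd _, ?_, fun W hW hTW => ?_, ?_⟩
  · rw [← hΦ, hcontr.fixedPoint_isFixedPt]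
  · obtain ⟨F, rfl⟩ := hlift W hW
    have hF : Function.IsFixedPt Φ F := DFunLike.coe_injective ((hΦ F).trans hTW)
    rw [hcontr.fixedPoint_unique hF]
  · refine tendsto_pi_nhds.2 fun s => ?_
    simpa only [hiter, Function.comp_def] using
      ((continuous_eval_const s).tendsto _).comp (hcontr.tendsto_iterate_fixedPoint 0)

end FixedPoint

section Scheduling

variable {N M hh : ℕ} {p : Fin N → Fin M → Fin hh → ℝ} {q : Chan N M hh → ℝ}
  {g : Fin N → ℕ+ → ℝ} {γ : ℝ} {V W : MDPState N M hh → ℝ}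

theorem exists_feasible (hMN : M ≤ N) : ∃ a : SchedAction N M, Feasible a := by
  have hinj : Function.Injective (Fin.castLE hMN) := Fin.castLE_injective hMN
  refine ⟨Function.partialInv (Fin.castLE hMN), fun m => ⟨Fin.castLE hMN m, ?_, fun n hn => ?_⟩⟩
  · exact Function.partialInv_left hinj m
  · exact ((hinj.isPartialInv m n).1 hn).symm

theorem nextAoI_mono (b : Fin N → Bool) : Monotone fun τ : AoI N => nextAoI τ b := by
  intro τ τ' hτ n
  simp only [nextAoI]
  split
  · exact le_rfl
  · exact add_le_add_left (hτ n) 1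

theorem devProb_nonneg (hp0 : ∀ n m h, 0 ≤ p n m h) (hp1 : ∀ n m h, p n m h ≤ 1)
    (H : Chan N M hh) (a : SchedAction N M) (b : Fin N → Bool) (n : Fin N) :
    0 ≤ devProb p H a b n := by
  unfold devProb
  split <;> split
  · exact sub_nonneg.2 (hp1 _ _ _)
  · exact hp0 _ _ _
  · exact le_rfl
  · exact zero_le_one

theorem sum_prod_devProb (H : Chan N M hh) (a : SchedAction N M) :
    ∑ b : Fin N → Bool, ∏ n, devProb p H a b n = 1 := by
  have hdev (n : Fin N) : ∑ x : Bool, devProb p H a (fun _ => x) n = 1 := by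
    rw [Fintype.sum_bool]
    unfold devProb
    cases a n <;> simp
  calc ∑ b : Fin N → Bool, ∏ n, devProb p H a b n
      = ∏ n, ∑ x : Bool, devProb p H a (fun _ => x) n :=
        (Fintype.prod_sum fun n x => devProb p H a (fun _ => x) n).symm
    _ = 1 := Finset.prod_eq_one fun n _ => hdev n

theorem expNext_le_expNext (hp0 : ∀ n m h, 0 ≤ p n m h) (hp1 : ∀ n m h, p n m h ≤ 1)
    (hq0 : ∀ H, 0 ≤ q H) {τ τ' : AoI N}
    (h : ∀ b H', V (nextAoI τ b, H') ≤ W (nextAoI τ' b, H')) (H : Chan N M hh)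
    (a : SchedAction N M) : expNext p q V (τ, H) a ≤ expNext p q W (τ', H) a :=
  Finset.sum_le_sum fun H' _ => Finset.sum_le_sum fun b _ =>
    mul_le_mul_of_nonneg_left (h b H')
      (mul_nonneg (hq0 H') (Finset.prod_nonneg fun n _ => devProb_nonneg hp0 hp1 H a b n))

theorem expNext_add_const (hq1 : ∑ H, q H = 1) (V : MDPState N M hh → ℝ) (c : ℝ)
    (s : MDPState N M hh) (a : SchedAction N M) :
    expNext p q (fun x => V x + c) s a = expNext p q V s a + c := by
  simp_rw [expNext, mul_add, Finset.sum_add_distrib, ← Finset.sum_mul, ← Finset.mul_sum,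
    sum_prod_devProb, mul_one, hq1, one_mul]

theorem bellmanT_apply (s : MDPState N M hh) :
    bellmanT p q g γ V s =
      -∑ n, g n (s.1 n) + γ * ⨆ a : {a : SchedAction N M // Feasible a}, expNext p q V s a := by
  rw [bellmanT, sSup_image']
  rfl

theorem bellmanT_le_bellmanT (hp0 : ∀ n m h, 0 ≤ p n m h) (hp1 : ∀ n m h, p n m h ≤ 1)
    (hq0 : ∀ H, 0 ≤ q H) (hγ0 : 0 ≤ γ) {τ τ' : AoI N}
    (hg : ∀ n, g n (τ' n) ≤ g n (τ n))
    (h : ∀ b H', V (nextAoI τ b, H') ≤ W (nextAoI τ' b, H')) (H : Chan N M hh) :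
    bellmanT p q g γ V (τ, H) ≤ bellmanT p q g γ W (τ', H) := by
  rw [bellmanT_apply, bellmanT_apply]
  refine add_le_add (neg_le_neg (Finset.sum_le_sum fun n _ => hg n)) ?_
  refine mul_le_mul_of_nonneg_left (ciSup_mono (Set.finite_range _).bddAbove fun a => ?_) hγ0
  exact expNext_le_expNext hp0 hp1 hq0 h H a

theorem bellmanT_mono (hp0 : ∀ n m h, 0 ≤ p n m h) (hp1 : ∀ n m h, p n m h ≤ 1)
    (hq0 : ∀ H, 0 ≤ q H) (hγ0 : 0 ≤ γ) : Monotone (bellmanT p q g γ) :=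
  fun _ _ hVW s => bellmanT_le_bellmanT hp0 hp1 hq0 hγ0 (fun _ => le_rfl) (fun _ _ => hVW _) s.2

theorem antitone_bellmanT (hp0 : ∀ n m h, 0 ≤ p n m h) (hp1 : ∀ n m h, p n m h ≤ 1)
    (hq0 : ∀ H, 0 ≤ q H) (hgmono : ∀ n, Monotone (g n)) (hγ0 : 0 ≤ γ)
    (hV : ∀ H, Antitone fun τ => V (τ, H)) (H : Chan N M hh) :
    Antitone fun τ => bellmanT p q g γ V (τ, H) :=
  fun _ _ hτ => bellmanT_le_bellmanT hp0 hp1 hq0 hγ0 (fun n => hgmono n (hτ n))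
    (fun b H' => hV H' (nextAoI_mono b hτ)) H

theorem bellmanT_add_const (hMN : M ≤ N) (hq1 : ∑ H, q H = 1) (V : MDPState N M hh → ℝ) (c : ℝ)
    (s : MDPState N M hh) :
    bellmanT p q g γ (fun x => V x + c) s = bellmanT p q g γ V s + γ * c := by
  have : Nonempty {a : SchedAction N M // Feasible a} := nonempty_subtype.2 (exists_feasible hMN)
  simp_rw [bellmanT_apply, expNext_add_const hq1]
  rw [← ciSup_add (Set.finite_range _).bddAbove, mul_add, add_assoc]

theorem bellmanT_zero (s : MDPState N M hh) : bellmanT p q g γ 0 s = -∑ n, g n (s.1 n) := by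
  simp [bellmanT_apply, expNext]

theorem bounded_bellmanT_zero (hgmono : ∀ n, Monotone (g n)) (hgbdd : ∀ n, ∃ C, ∀ τ, g n τ ≤ C) :
    ∃ B, ∀ s, |bellmanT p q g γ 0 s| ≤ B := by
  choose C hC using hgbdd
  refine ⟨∑ n, max |g n 1| |C n|, fun s => ?_⟩
  rw [bellmanT_zero, abs_neg]
  exact (Finset.abs_sum_le_sum_abs _ _).trans <| Finset.sum_le_sum fun n _ =>
    abs_le_max_abs_abs (hgmono n one_le) (hC n _)

theorem AoIAntitone.of_antitone (hV : ∀ H, Antitone fun τ => V (τ, H)) : AoIAntitone V := by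
  intro n H τ τ' hne hn
  refine hV H fun k => ?_
  obtain rfl | hk := eq_or_ne k n
  · exact hn
  · exact (hne k hk).ge

end Scheduling

theorem optimal_value_antitone_in_aoi_general
    {N M hh : ℕ} (hMN : M ≤ N)
    {p : Fin N → Fin M → Fin hh → ℝ}
    (hp0 : ∀ n m h, 0 ≤ p n m h) (hp1 : ∀ n m h, p n m h ≤ 1)
    {q : Chan N M hh → ℝ} (hq0 : ∀ H, 0 ≤ q H) (hq1 : ∑ H, q H = 1)
    {g : Fin N → ℕ+ → ℝ} (hgmono : ∀ n, Monotone (g n))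
    (hgbdd : ∀ n, ∃ C : ℝ, ∀ τ, g n τ ≤ C)
    {γ : ℝ} (hγ0 : 0 ≤ γ) (hγ1 : γ < 1) :
    ∃ Vstar : MDPState N M hh → ℝ,
      (∃ C : ℝ, ∀ s, |Vstar s| ≤ C) ∧
      bellmanT p q g γ Vstar = Vstar ∧
      (∀ W : MDPState N M hh → ℝ,
        (∃ C : ℝ, ∀ s, |W s| ≤ C) → bellmanT p q g γ W = W → W = Vstar) ∧
      ∀ H, Antitone fun τ => Vstar (τ, H) := by
  obtain ⟨V, hbdd, hfix, huniq, hlim⟩ := exists_bounded_fixedPoint_of_contraction hγ0 hγ1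
    (fun _ _ _ => abs_sub_le_mul_of_monotone_of_discount
      (bellmanT_mono hp0 hp1 hq0 hγ0) fun V c s _ => (bellmanT_add_const hMN hq1 V c s).le)
    (bounded_bellmanT_zero (p := p) (q := q) hgmono hgbdd)
  have hiter (k : ℕ) : ∀ H, Antitone fun τ => (bellmanT p q g γ)^[k] 0 (τ, H) := by
    induction k with
    | zero => exact fun _ => antitone_const
    | succ k ih =>
      rw [Function.iterate_succ_apply']
      exact antitone_bellmanT hp0 hp1 hq0 hgmono hγ0 ih
  have hpt := tendsto_pi_nhds.1 hlim
  exact ⟨V, hbdd, hfix, huniq, fun H _ _ hτ =>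
    le_of_tendsto_of_tendsto' (hpt _) (hpt _) fun k => hiter k H hτ⟩

/-- **Lemma 1** (monotonicity of the optimal value function w.r.t. AoI states, in
Bellman fixed-point form). If each `g n` is bounded, positive and nondecreasing,
then the Bellman operator has a unique bounded fixed point `V*`, and `V*` is
AoI-antitone. -/
theorem optimal_value_antitone_in_aoi
    (N M hh : ℕ) (hMN : M < N)
    (p : Fin N → Fin M → Fin hh → ℝ)
    (hp0 : ∀ n m h, 0 ≤ p n m h) (hp1 : ∀ n m h, p n m h ≤ 1)
    (hpmono : ∀ n m, Monotone (p n m))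
    (q : Chan N M hh → ℝ) (hq0 : ∀ H, 0 ≤ q H) (hq1 : ∑ H : Chan N M hh, q H = 1)
    (g : Fin N → ℕ+ → ℝ) (hgpos : ∀ n τ, 0 < g n τ) (hgmono : ∀ n, Monotone (g n))
    (hgbdd : ∀ n, ∃ C : ℝ, ∀ τ, g n τ ≤ C)
    (γ : ℝ) (hγ0 : 0 < γ) (hγ1 : γ < 1) :
    ∃ Vstar : MDPState N M hh → ℝ,
      (∃ C : ℝ, ∀ s, |Vstar s| ≤ C) ∧
      bellmanT p q g γ Vstar = Vstar ∧
      (∀ W : MDPState N M hh → ℝ,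
        (∃ C : ℝ, ∀ s, |W s| ≤ C) → bellmanT p q g γ W = W → W = Vstar) ∧
      AoIAntitone Vstar := by
  obtain ⟨V, hbdd, hfix, huniq, hanti⟩ := optimal_value_antitone_in_aoi_general hMN.le hp0 hp1
    hq0 hq1 hgmono hgbdd hγ0.le hγ1
  exact ⟨V, hbdd, hfix, huniq, .of_antitone hanti⟩
end
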